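/- If ξ is a coding of ν, an enumeration of an equivalence relation E on ℕ in which every equivalence class is infinite, then the transitive closure of R_ξ ∪ R_ξ⁻¹ is a decidable equivalence relation on ℕ in which every equivalence class is infinite. -/

import Mathlib

/-- `E` is an equivalence relation on ℕ, viewed as a set of pairs:
reflexive, symmetric, transitive. -/
def IsEquivRel (E : Set (ℕ × ℕ)) : Prop :=
  (∀ n, (n, n) ∈ E) ∧ (∀ ⦃i j⦄, (i, j) ∈ E → (j, i) ∈ E) ∧
    (∀ ⦃i j k⦄, (i, j) ∈ E → (j, k) ∈ E → (i, k) ∈ E)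

/-- `H` is a symmetric relation. -/
def IsSymRel (H : Set (ℕ × ℕ)) : Prop := ∀ ⦃i j⦄, (i, j) ∈ H → (j, i) ∈ H

/-- `H` is a transitive relation. -/
def IsTransRel (H : Set (ℕ × ℕ)) : Prop :=
  ∀ ⦃i j k⦄, (i, j) ∈ H → (j, k) ∈ H → (i, k) ∈ H

/-- A relation on ℕ is decidable if membership in it is a computable predicate. -/
def DecidableRelSet (R : Set (ℕ × ℕ)) : Prop :=
  ComputablePred (fun p : ℕ × ℕ => p ∈ R)

/-- `ν : ℕ₊ → ℕ × ℕ` (modelled as a function on ℕ, restricted to positive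
arguments) is an enumeration of `R`: a computable function whose range (over
positive arguments) is `R`. -/
def IsEnumeration (ν : ℕ → ℕ × ℕ) (R : Set (ℕ × ℕ)) : Prop :=
  Computable ν ∧ R = {e | ∃ n, 1 ≤ n ∧ ν n = e}

/-- A relation on ℕ is semi-decidable (computably enumerable) if it is the
range of a computable function `ν : ℕ₊ → ℕ × ℕ`. -/
def SemiDecidableRel (R : Set (ℕ × ℕ)) : Prop := ∃ ν, IsEnumeration ν R

/-- A subset of ℕ is semi-decidable (computably enumerable) if it is the range
of a computable function on positive arguments. -/
def SemiDecidableSet (A : Set ℕ) : Prop :=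
  ∃ f : ℕ → ℕ, Computable f ∧ A = {a | ∃ n, 1 ≤ n ∧ f n = a}

/-- `E` is IC: every equivalence class `[i]_E = {j | (i,j) ∈ E}` is infinite. -/
def IC (E : Set (ℕ × ℕ)) : Prop := ∀ i, {j | (i, j) ∈ E}.Infinite

/-- `E` is FC: every equivalence class `[i]_E = {j | (i,j) ∈ E}` is finite. -/
def FC (E : Set (ℕ × ℕ)) : Prop := ∀ i, {j | (i, j) ∈ E}.Finite

/-- Composition of relations: `RS = {(i,k) | ∃ j, (i,j) ∈ R ∧ (j,k) ∈ S}`. -/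
def relComp (R S : Set (ℕ × ℕ)) : Set (ℕ × ℕ) :=
  {p | ∃ j, (p.1, j) ∈ R ∧ (j, p.2) ∈ S}

/-- Converse relation: `R⁻¹ = {(j,i) | (i,j) ∈ R}`. -/
def relInv (R : Set (ℕ × ℕ)) : Set (ℕ × ℕ) := {p | (p.2, p.1) ∈ R}

/-- Transitive closure of a relation, `tc R = ⋃_{n ≥ 1} Rⁿ`. -/
def tc (R : Set (ℕ × ℕ)) : Set (ℕ × ℕ) :=
  {p | Relation.TransGen (fun i j => (i, j) ∈ R) p.1 p.2}

/-- `ξ` is a coding of the enumeration `ν` (with `π = ν ∘ ξ`):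
a computable `ξ : ℕ₊ → ℕ₊` such that `1 < ξ(1)`, `π₁(π(1)) = π₁(ν(1))`,
`max {1, π₁(ν(1))} < π₂(π(1))`, and for every `n ≥ 1`: `ξ(n) < ξ(n+1)`,
`π₁(ν(ξ(n+1))) = π₁(ν(n+1))`, and
`max {π₁(π(n+1)), π₂(π(n))} < π₂(π(n+1))`. -/
def IsCoding (ν : ℕ → ℕ × ℕ) (ξ : ℕ → ℕ) : Prop :=
  Computable ξ ∧
  1 < ξ 1 ∧ (ν (ξ 1)).1 = (ν 1).1 ∧ max 1 (ν 1).1 < (ν (ξ 1)).2 ∧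
  ∀ n, 1 ≤ n →
    ξ n < ξ (n + 1) ∧ (ν (ξ (n + 1))).1 = (ν (n + 1)).1 ∧
    max (ν (ξ (n + 1))).1 (ν (ξ n)).2 < (ν (ξ (n + 1))).2

/-- `R_ξ = {π(n) | n ∈ ℕ₊}` where `π = ν ∘ ξ`. -/
def Rcod (ν : ℕ → ℕ × ℕ) (ξ : ℕ → ℕ) : Set (ℕ × ℕ) :=
  {e | ∃ n, 1 ≤ n ∧ ν (ξ n) = e}

/-- `S_ξ = {(π₂(π(m)), π₂(π(n))) | m, n ∈ ℕ₊ and ν(n) = (ν(m))⁻¹}`. -/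
def Scod (ν : ℕ → ℕ × ℕ) (ξ : ℕ → ℕ) : Set (ℕ × ℕ) :=
  {e | ∃ m, 1 ≤ m ∧ ∃ n, 1 ≤ n ∧ ν n = ((ν m).2, (ν m).1) ∧
    e = ((ν (ξ m)).2, (ν (ξ n)).2)}

/-- `T_ξ = {(π₂(π(m)), π₂(π(n))) | m, n ∈ ℕ₊ and ν(n) = ν(m)}`. -/
def Tcod (ν : ℕ → ℕ × ℕ) (ξ : ℕ → ℕ) : Set (ℕ × ℕ) :=
  {e | ∃ m, 1 ≤ m ∧ ∃ n, 1 ≤ n ∧ ν n = ν m ∧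
    e = ((ν (ξ m)).2, (ν (ξ n)).2)}

/-- The identity relation `I = {(n,n) | n ∈ ℕ}`. -/
def diagRel : Set (ℕ × ℕ) := {p | p.1 = p.2}

/-- The field of a relation: `F(H) = {i | ∃ j, (i,j) ∈ H ∨ (j,i) ∈ H}`. -/
def fld (H : Set (ℕ × ℕ)) : Set ℕ := {i | ∃ j, (i, j) ∈ H ∨ (j, i) ∈ H}

/-!
Since the second coordinates of `π = ν ∘ ξ` are strictly increasing and exceed the first ones, the
edges `(i, j) ∈ R_ξ` form a forest in which every `j` has at most one parent `i`, and `i < j`.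
Moreover `n < π₂(π(n))`, so the parent of `j`, if any, is found among the first `j` edges. Hence the
root of the tree containing `j` is reached in at most `j` computable steps, and two numbers are
related by the transitive closure iff they have the same root. Every class is infinite because
`(i, j) = ν(n)` ranges over infinitely many `n` for fixed `i`, and each such `n` yields a new child
`π₂(π(n))` of `i`.
-/

section Computability

variable {α β : Type*} [Primcodable α] [Primcodable β]

theorem computablePred_comp {p : β → Prop} {f : α → β} (hp : ComputablePred p)
    (hf : Computable f) : ComputablePred fun a => p (f a) :=
  hp.computable_of_manyOneReducible ⟨f, hf, fun _ => Iff.rfl⟩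

theorem computablePred_or {p q : α → Prop} (hp : ComputablePred p) (hq : ComputablePred q) :
    ComputablePred fun a => p a ∨ q a := by
  classical
  exact ((Primrec.or.to_comp.comp hp.decide hq.decide).of_eq fun a => by simp).computablePred

theorem computablePred_and {p q : α → Prop} (hp : ComputablePred p) (hq : ComputablePred q) :
    ComputablePred fun a => p a ∧ q a := by
  classical
  exact ((Primrec.and.to_comp.comp hp.decide hq.decide).of_eq fun a => by simp).computablePred

theorem computablePred_eq {f g : α → β} (hf : Computable f) (hg : Computable g) :
    ComputablePred fun a => f a = g a := by
  classical
  exact (Primrec.eq.decide.to_comp.comp hf hg).computablePred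

theorem computablePred_le {f g : α → ℕ} (hf : Computable f) (hg : Computable g) :
    ComputablePred fun a => f a ≤ g a :=
  (Primrec.nat_le.decide.to_comp.comp hf hg).computablePred

theorem computablePred_exists_of_le {p : α → ℕ → Prop} {b : α → ℕ}
    (hp : ComputablePred fun x : α × ℕ => p x.1 x.2) (hb : Computable b)
    (hle : ∀ a n, p a n → n ≤ b a) : ComputablePred fun a => ∃ n, p a n := by
  classical
  have hex (a : α) : ∃ n, p a n ∨ b a ≤ n := ⟨b a, Or.inr le_rfl⟩
  have hfind : Computable fun a => Nat.find (hex a) :=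
    Computable.find (computablePred_or hp
      (computablePred_le (hb.comp Computable.fst) Computable.snd)) hex
  refine (computablePred_comp hp (Computable.id.pair hfind)).of_eq fun a =>
    ⟨fun h => ⟨_, h⟩, fun ⟨n, hn⟩ => ?_⟩
  rcases Nat.find_spec (hex a) with h | h
  · exact h
  · have hfind_le : Nat.find (hex a) ≤ n := Nat.find_min' (hex a) (Or.inl hn)
    have heq : Nat.find (hex a) = n := le_antisymm hfind_le ((hle a n hn).trans h)
    simpa only [id_eq, heq] using hn

theorem computable_iterate {n : α → ℕ} {g : α → β} {f : β → β} (hn : Computable n)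
    (hg : Computable g) (hf : Computable f) : Computable fun a => f^[n a] (g a) := by
  have hstep : Computable₂ fun (_ : α) (x : ℕ × β) => f x.2 :=
    hf.comp (Computable.snd.comp Computable.snd)
  refine (Computable.nat_rec hn hg hstep).of_eq fun a => ?_
  induction n a with
  | zero => rfl
  | succ k ih => rw [Function.iterate_succ_apply', ← ih]

end Computability

section Iterate

variable {p : ℕ → ℕ}

theorem isFixedPt_iterate_of_le (hp : ∀ j, p j ≤ j) {j k : ℕ} (hjk : j ≤ k) :
    Function.IsFixedPt p (p^[k] j) := by
  induction k generalizing j with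
  | zero =>
    obtain rfl := Nat.le_zero.mp hjk
    exact Nat.le_zero.mp (hp 0)
  | succ k ih =>
    rw [Function.iterate_succ_apply]
    rcases (hp j).eq_or_lt with hj | hj
    · rw [hj, Function.iterate_fixed hj]
      exact hj
    · exact ih (by omega)

theorem iterate_eq_iterate_self_of_le (hp : ∀ j, p j ≤ j) {j k : ℕ} (hjk : j ≤ k) :
    p^[k] j = p^[j] j := by
  rw [← Nat.sub_add_cancel hjk, Function.iterate_add_apply]
  exact Function.iterate_fixed (isFixedPt_iterate_of_le hp le_rfl) _

theorem iterate_self_apply (hp : ∀ j, p j ≤ j) (j : ℕ) : p^[p j] (p j) = p^[j] j :=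
  calc p^[p j] (p j) = p^[j] (p j) := (iterate_eq_iterate_self_of_le hp (hp j)).symm
    _ = p^[j + 1] j := (Function.iterate_succ_apply p j j).symm
    _ = p^[j] j := iterate_eq_iterate_self_of_le hp j.le_succ

end Iterate

section TransitiveClosure

variable {R S : Set (ℕ × ℕ)} {i j : ℕ}

theorem subset_tc (R : Set (ℕ × ℕ)) : R ⊆ tc R :=
  fun _ h => Relation.TransGen.single h

theorem isTransRel_tc (R : Set (ℕ × ℕ)) : IsTransRel (tc R) :=
  fun _ _ _ => Relation.TransGen.trans

theorem IsSymRel.tc (hR : IsSymRel R) : IsSymRel (tc R) :=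
  fun _ _ h => Relation.transGen_swap.mp (Relation.TransGen.mono (fun _ _ hij => hR hij) _ _ h)

theorem isSymRel_union_relInv (R : Set (ℕ × ℕ)) : IsSymRel (R ∪ relInv R) :=
  fun _ _ => Or.symm

theorem isEquivRel_tc_union_relInv (hR : fld R = Set.univ) :
    IsEquivRel (tc (R ∪ relInv R)) := by
  have hsymm := (isSymRel_union_relInv R).tc
  refine ⟨fun i => ?_, hsymm, isTransRel_tc _⟩
  obtain ⟨j, hj⟩ : i ∈ fld R := hR ▸ Set.mem_univ i
  have hij : (i, j) ∈ tc (R ∪ relInv R) := subset_tc _ hj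
  exact isTransRel_tc _ hij (hsymm hij)

theorem apply_eq_of_mem_tc {α : Type*} {f : ℕ → α} (hf : ∀ i j, (i, j) ∈ R → f i = f j)
    (h : (i, j) ∈ tc R) : f i = f j := by
  have hlift := Relation.TransGen.lift (p := Eq) f hf _ _ h
  rwa [Relation.transGen_eq_self] at hlift

theorem IC.mono (hR : IC R) (hRS : R ⊆ S) : IC S :=
  fun i => (hR i).mono fun _ hj => hRS hj

theorem IC.fld_eq_univ (hR : IC R) : fld R = Set.univ :=
  Set.eq_univ_of_forall fun i => (hR i).nonempty.imp fun _ => Or.inl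

end TransitiveClosure

/-- `R`, read as a set of edges from parent to child, is a forest on ℕ in which every parent is
smaller than its children. -/
structure IsForest (R : Set (ℕ × ℕ)) : Prop where
  lt : ∀ ⦃i j⦄, (i, j) ∈ R → i < j
  leftUnique : ∀ ⦃i i' j⦄, (i, j) ∈ R → (i', j) ∈ R → i = i'

section Forest

variable {R : Set (ℕ × ℕ)} {i j : ℕ}

theorem exists_mem_or_eq (R : Set (ℕ × ℕ)) (j : ℕ) : ∃ i, (i, j) ∈ R ∨ i = j :=
  ⟨j, Or.inr rfl⟩

open Classical in
/-- The parent of `j` in a forest `R`, or `j` itself if `j` has no parent. As parents are smaller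
than their children, taking the least candidate prefers the parent over `j`. -/
noncomputable def parent (R : Set (ℕ × ℕ)) (j : ℕ) : ℕ :=
  Nat.find (exists_mem_or_eq R j)

/-- The root of the tree of the forest `R` containing `j`. Parents decrease, so `j` steps
suffice to reach it. -/
noncomputable def root (R : Set (ℕ × ℕ)) (j : ℕ) : ℕ :=
  (parent R)^[j] j

theorem parent_mem_or_eq (R : Set (ℕ × ℕ)) (j : ℕ) : (parent R j, j) ∈ R ∨ parent R j = j := by
  classical
  exact Nat.find_spec (exists_mem_or_eq R j)

theorem parent_le_of_mem (h : (i, j) ∈ R) : parent R j ≤ i := by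
  classical
  exact Nat.find_min' (exists_mem_or_eq R j) (Or.inl h)

theorem parent_le (R : Set (ℕ × ℕ)) (j : ℕ) : parent R j ≤ j := by
  classical
  exact Nat.find_min' (exists_mem_or_eq R j) (Or.inr rfl)

theorem root_parent (R : Set (ℕ × ℕ)) (j : ℕ) : root R (parent R j) = root R j :=
  iterate_self_apply (parent_le R) j

theorem IsForest.parent_eq (hR : IsForest R) (h : (i, j) ∈ R) : parent R j = i := by
  rcases parent_mem_or_eq R j with hj | hj
  · exact hR.leftUnique hj h
  · exact absurd (hR.lt h) (hj ▸ parent_le_of_mem h).not_gt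

theorem IsForest.root_eq_of_mem (hR : IsForest R) (h : (i, j) ∈ R) : root R i = root R j := by
  rw [← root_parent R j, hR.parent_eq h]

theorem IsForest.root_eq_of_mem_tc (hR : IsForest R) (h : (i, j) ∈ tc (R ∪ relInv R)) :
    root R i = root R j :=
  apply_eq_of_mem_tc (fun _ _ hij =>
    hij.elim hR.root_eq_of_mem fun hji => (hR.root_eq_of_mem hji).symm) h

theorem root_mem_tc (hfld : fld R = Set.univ) (j : ℕ) :
    (root R j, j) ∈ tc (R ∪ relInv R) := by
  have hrefl := (isEquivRel_tc_union_relInv hfld).1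
  have hparent (m : ℕ) : (parent R m, m) ∈ tc (R ∪ relInv R) := by
    rcases parent_mem_or_eq R m with hm | hm
    · exact subset_tc _ (Or.inl hm)
    · rw [hm]
      exact hrefl m
  have hiterate (k : ℕ) : ((parent R)^[k] j, j) ∈ tc (R ∪ relInv R) := by
    induction k with
    | zero => exact hrefl j
    | succ k ih =>
      rw [Function.iterate_succ_apply']
      exact isTransRel_tc _ (hparent _) ih
  exact hiterate j

theorem IsForest.mem_tc_iff_root_eq (hR : IsForest R) (hfld : fld R = Set.univ) :
    (i, j) ∈ tc (R ∪ relInv R) ↔ root R i = root R j := by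
  refine ⟨hR.root_eq_of_mem_tc, fun h => ?_⟩
  obtain ⟨-, hsymm, htrans⟩ := isEquivRel_tc_union_relInv hfld
  have hi : (root R j, i) ∈ tc (R ∪ relInv R) := h ▸ root_mem_tc hfld i
  exact htrans (hsymm hi) (root_mem_tc hfld j)

theorem computable_parent (hR : DecidableRelSet R) : Computable (parent R) := by
  classical
  have hmem : ComputablePred fun x : ℕ × ℕ => (x.2, x.1) ∈ R :=
    computablePred_comp hR (Computable.snd.pair Computable.fst)
  exact Computable.find
    (computablePred_or hmem (computablePred_eq Computable.snd Computable.fst)) _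

theorem computable_root (hR : DecidableRelSet R) : Computable (root R) :=
  computable_iterate Computable.id Computable.id (computable_parent hR)

theorem IsForest.decidableRelSet_tc (hR : IsForest R) (hdec : DecidableRelSet R)
    (hfld : fld R = Set.univ) : DecidableRelSet (tc (R ∪ relInv R)) := by
  have hroot := computable_root hdec
  exact (computablePred_eq (hroot.comp Computable.fst) (hroot.comp Computable.snd)).of_eq
    fun _ => (hR.mem_tc_iff_root_eq hfld).symm

end Forest

section Coding

variable {E : Set (ℕ × ℕ)} {ν : ℕ → ℕ × ℕ} {ξ : ℕ → ℕ} {n : ℕ}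

theorem IsCoding.fst_eq (hξ : IsCoding ν ξ) (hn : 1 ≤ n) : (ν (ξ n)).1 = (ν n).1 := by
  obtain ⟨-, -, hone, -, hsucc⟩ := hξ
  rcases hn.eq_or_lt with rfl | hlt
  · exact hone
  · obtain ⟨m, rfl⟩ := Nat.exists_eq_add_of_lt hlt
    exact (hsucc (1 + m) (by omega)).2.1

theorem IsCoding.fst_lt_snd (hξ : IsCoding ν ξ) (hn : 1 ≤ n) :
    (ν (ξ n)).1 < (ν (ξ n)).2 := by
  obtain ⟨-, -, hone, hlt_one, hsucc⟩ := hξ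
  rcases hn.eq_or_lt with rfl | hlt
  · exact hone.trans_lt ((le_max_right _ _).trans_lt hlt_one)
  · obtain ⟨m, rfl⟩ := Nat.exists_eq_add_of_lt hlt
    exact (le_max_left _ _).trans_lt (hsucc (1 + m) (by omega)).2.2

theorem IsCoding.strictMonoOn_snd (hξ : IsCoding ν ξ) :
    StrictMonoOn (fun n => (ν (ξ n)).2) (Set.Ici 1) :=
  strictMonoOn_of_lt_add_one Set.ordConnected_Ici fun n _ hn _ =>
    (le_max_right _ _).trans_lt (hξ.2.2.2.2 n hn).2.2

theorem IsCoding.lt_snd (hξ : IsCoding ν ξ) (hn : 1 ≤ n) : n < (ν (ξ n)).2 := by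
  induction n, hn using Nat.le_induction with
  | base => exact (le_max_left _ _).trans_lt hξ.2.2.2.1
  | succ n hn ih =>
    exact Nat.lt_of_le_of_lt ih (hξ.strictMonoOn_snd hn (Nat.le_succ_of_le hn) n.lt_succ_self)

theorem IsCoding.isForest_rcod (hξ : IsCoding ν ξ) : IsForest (Rcod ν ξ) where
  lt := by
    rintro i j ⟨n, hn, h⟩
    simpa only [h] using hξ.fst_lt_snd hn
  leftUnique := by
    rintro i i' j ⟨m, hm, hi⟩ ⟨n, hn, hi'⟩
    have hmn : m = n := hξ.strictMonoOn_snd.injOn hm hn (by simp only [hi, hi'])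
    subst hmn
    exact congrArg Prod.fst (hi.symm.trans hi')

theorem IsCoding.decidableRelSet_rcod (hξ : IsCoding ν ξ) (hν : Computable ν) :
    DecidableRelSet (Rcod ν ξ) := by
  have hπ : Computable fun x : (ℕ × ℕ) × ℕ => ν (ξ x.2) :=
    hν.comp (hξ.1.comp Computable.snd)
  refine computablePred_exists_of_le (b := Prod.snd)
    (computablePred_and (computablePred_le (Computable.const 1) Computable.snd)
      (computablePred_eq hπ Computable.fst)) Computable.snd ?_
  rintro _ n ⟨hn, rfl⟩
  exact (hξ.lt_snd hn).le

theorem IsEnumeration.infinite_setOf_fst_eq (hν : IsEnumeration ν E) {i : ℕ}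
    (hi : {j | (i, j) ∈ E}.Infinite) : {n | 1 ≤ n ∧ (ν n).1 = i}.Infinite := by
  refine Set.Infinite.of_image (fun n => (ν n).2) (hi.mono fun j hj => ?_)
  obtain ⟨n, hn, h⟩ : (i, j) ∈ {e | ∃ n, 1 ≤ n ∧ ν n = e} := hν.2 ▸ hj
  exact ⟨n, ⟨hn, by rw [h]⟩, by simp only [h]⟩

theorem IsCoding.ic_rcod (hξ : IsCoding ν ξ) (hν : IsEnumeration ν E) (hE : IC E) :
    IC (Rcod ν ξ) := by
  intro i
  have hinj : Set.InjOn (fun n => (ν (ξ n)).2) {n | 1 ≤ n ∧ (ν n).1 = i} :=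
    hξ.strictMonoOn_snd.injOn.mono fun _ hn => hn.1
  refine ((hν.infinite_setOf_fst_eq (hE i)).image hinj).mono ?_
  rintro _ ⟨n, ⟨hn, rfl⟩, rfl⟩
  exact ⟨n, hn, Prod.ext (hξ.fst_eq hn) rfl⟩

end Coding

theorem stmt_15_general (E : Set (ℕ × ℕ)) (ν : ℕ → ℕ × ℕ) (ξ : ℕ → ℕ)
    (hIC : IC E) (hν : IsEnumeration ν E) (hξ : IsCoding ν ξ) :
    DecidableRelSet (tc (Rcod ν ξ ∪ relInv (Rcod ν ξ))) ∧
    IsEquivRel (tc (Rcod ν ξ ∪ relInv (Rcod ν ξ))) ∧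
    IC (tc (Rcod ν ξ ∪ relInv (Rcod ν ξ))) := by
  have hICR : IC (Rcod ν ξ) := hξ.ic_rcod hν hIC
  have hfld : fld (Rcod ν ξ) = Set.univ := hICR.fld_eq_univ
  exact ⟨hξ.isForest_rcod.decidableRelSet_tc (hξ.decidableRelSet_rcod hν.1) hfld,
    isEquivRel_tc_union_relInv hfld, hICR.mono (Set.subset_union_left.trans (subset_tc _))⟩

theorem stmt_15 (E : Set (ℕ × ℕ)) (ν : ℕ → ℕ × ℕ) (ξ : ℕ → ℕ)
    (hE : IsEquivRel E) (hIC : IC E) (hν : IsEnumeration ν E)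
    (hξ : IsCoding ν ξ) :
    DecidableRelSet (tc (Rcod ν ξ ∪ relInv (Rcod ν ξ))) ∧
    IsEquivRel (tc (Rcod ν ξ ∪ relInv (Rcod ν ξ))) ∧
    IC (tc (Rcod ν ξ ∪ relInv (Rcod ν ξ))) :=
  stmt_15_general E ν ξ hIC hν hξ
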